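/- arXiv:2512.04558 — 2 statements merged into one kernel-verified Lean document; each statement's English description precedes it below -/
import Mathlib

section
/- Posterior weight concentration. Assume the mixture-of-reference-policies model, and fix τ* ∈ 𝒯 with p_ref(τ*) > 0 and Δ > 0. Let h = (a₁, …, a_k) ∈ 𝒜^k be a history whose every action satisfies the margin condition π^τ(a_j) ≤ e^{−Δ}·π^{τ*}(a_j) for all τ ≠ τ* (with π^{τ*}(a_j) > 0). Then the posterior weight of τ* satisfies w_h(τ*) ≥ 1 − (1 − p_ref(τ*)) / (1 + p_ref(τ*)·(e^{kΔ} − 1)) ≥ 1 / (1 + e^{−kΔ}/p_ref(τ*)). -/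
/-!
Write `L τ` for the likelihood of the history under `τ`, `p` for the prior weight of `τ*` and
`c = e^{-kΔ}`. Multiplying the margin over the `k` actions gives `L τ ≤ c * L τ*` for `τ ≠ τ*`, so
the evidence `∑ τ, p_ref τ * L τ` is at most `(p + c * (1 - p)) * L τ*` and the posterior weight of
`τ*` is at least `p / (p + c * (1 - p))`. This quotient is the middle term of the theorem, and
bounding `1 - p` by `1` in it gives the last one.
-/

open Finset

/-- A policy on a finite action set is a probability mass function. -/
def IsPolicy {A : Type*} [Fintype A] (p : A → ℝ) : Prop :=
  (∀ a, 0 ≤ p a) ∧ ∑ a, p a = 1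

/-- Posterior weight of the reference index `τ` given a history `h`. -/
noncomputable def postW {T A : Type*} [Fintype T] (pref : T → ℝ) (pit : T → A → ℝ)
    (h : List A) (τ : T) : ℝ :=
  pref τ * (h.map (pit τ)).prod / ∑ τ', pref τ' * (h.map (pit τ')).prod

theorem list_prod_map_le_pow_length_mul {ι R : Type*} [CommSemiring R] [PartialOrder R]
    [IsOrderedRing R] {l : List ι} {f g : ι → R} {c : R}
    (hg : ∀ i ∈ l, 0 ≤ g i) (hgf : ∀ i ∈ l, g i ≤ c * f i) :
    (l.map g).prod ≤ c ^ l.length * (l.map f).prod :=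
  calc (l.map g).prod ≤ (l.map fun i => c * f i).prod := List.prod_map_le_prod_map₀ _ _ hg hgf
    _ = c ^ l.length * (l.map f).prod := by
      rw [List.prod_map_mul, List.map_const', List.prod_replicate]

section DominatingIndex

variable {ι 𝕜 : Type*} [DecidableEq ι] {s : Finset ι} {i₀ : ι}

theorem sum_mul_le_add_mul_sum_erase_mul [CommSemiring 𝕜] [PartialOrder 𝕜] [IsOrderedRing 𝕜]
    {p L : ι → 𝕜} {c : 𝕜} (hi₀ : i₀ ∈ s) (hp : ∀ i ∈ s.erase i₀, 0 ≤ p i)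
    (hL : ∀ i ∈ s.erase i₀, L i ≤ c * L i₀) :
    ∑ i ∈ s, p i * L i ≤ (p i₀ + c * ∑ i ∈ s.erase i₀, p i) * L i₀ :=
  calc ∑ i ∈ s, p i * L i = p i₀ * L i₀ + ∑ i ∈ s.erase i₀, p i * L i :=
        (add_sum_erase s (fun i => p i * L i) hi₀).symm
    _ ≤ p i₀ * L i₀ + ∑ i ∈ s.erase i₀, p i * (c * L i₀) := by
        gcongr with i hi
        exacts [hp i hi, hL i hi]
    _ = (p i₀ + c * ∑ i ∈ s.erase i₀, p i) * L i₀ := by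
        rw [← sum_mul]
        ring

theorem div_add_mul_sum_erase_le_mul_div_sum_mul [Field 𝕜] [LinearOrder 𝕜]
    [IsStrictOrderedRing 𝕜] {p L : ι → 𝕜} {c : 𝕜} (hi₀ : i₀ ∈ s) (hp : ∀ i ∈ s, 0 ≤ p i)
    (hp₀ : 0 < p i₀) (hL₀ : 0 < L i₀) (hL_nonneg : ∀ i ∈ s, 0 ≤ L i)
    (hL : ∀ i ∈ s.erase i₀, L i ≤ c * L i₀) :
    p i₀ / (p i₀ + c * ∑ i ∈ s.erase i₀, p i) ≤ p i₀ * L i₀ / ∑ i ∈ s, p i * L i := by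
  have hnum : 0 < p i₀ * L i₀ := mul_pos hp₀ hL₀
  have hsum : 0 < ∑ i ∈ s, p i * L i :=
    sum_pos' (fun i hi => mul_nonneg (hp i hi) (hL_nonneg i hi)) ⟨i₀, hi₀, hnum⟩
  calc p i₀ / (p i₀ + c * ∑ i ∈ s.erase i₀, p i)
      = p i₀ * L i₀ / ((p i₀ + c * ∑ i ∈ s.erase i₀, p i) * L i₀) :=
        (mul_div_mul_right _ _ hL₀.ne').symm
    _ ≤ p i₀ * L i₀ / ∑ i ∈ s, p i * L i :=
        div_le_div_of_nonneg_left hnum.le hsum <|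
          sum_mul_le_add_mul_sum_erase_mul hi₀ (fun i hi => hp i (mem_of_mem_erase hi)) hL

end DominatingIndex

theorem div_add_mul_one_sub_le_postW {T A : Type*} [Fintype T] {pref : T → ℝ}
    {pit : T → A → ℝ} {h : List A} {τs : T} {c : ℝ}
    (hpref : ∀ τ, 0 ≤ pref τ) (hprefs : 0 < pref τs) (hpref1 : ∑ τ, pref τ = 1)
    (hpit : ∀ τ, ∀ a ∈ h, 0 ≤ pit τ a) (hpits : ∀ a ∈ h, 0 < pit τs a)
    (hmargin : ∀ a ∈ h, ∀ τ, τ ≠ τs → pit τ a ≤ c * pit τs a) :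
    pref τs / (pref τs + c ^ h.length * (1 - pref τs)) ≤ postW pref pit h τs := by
  classical
  have hlik_pos : 0 < (h.map (pit τs)).prod := List.prod_pos (List.forall_mem_map.2 hpits)
  have hlik_nonneg (τ : T) : 0 ≤ (h.map (pit τ)).prod :=
    List.prod_nonneg (List.forall_mem_map.2 (hpit τ))
  have hlik_le (τ : T) (hτ : τ ≠ τs) :
      (h.map (pit τ)).prod ≤ c ^ h.length * (h.map (pit τs)).prod :=
    list_prod_map_le_pow_length_mul (hpit τ) fun a ha => hmargin a ha τ hτ
  have herase : ∑ τ ∈ univ.erase τs, pref τ = 1 - pref τs := by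
    rw [sum_erase_eq_sub (mem_univ τs), hpref1]
  rw [← herase]
  exact div_add_mul_sum_erase_le_mul_div_sum_mul (L := fun τ => (h.map (pit τ)).prod)
    (mem_univ τs) (fun τ _ => hpref τ) hprefs hlik_pos (fun τ _ => hlik_nonneg τ)
    fun τ hτ => hlik_le τ (ne_of_mem_erase hτ)

section Quotients

variable {𝕜 : Type*} [Field 𝕜]

theorem one_sub_div_one_add_mul_inv_sub_one {p c : 𝕜} (hc : c ≠ 0)
    (hpc : p + c * (1 - p) ≠ 0) :
    1 - (1 - p) / (1 + p * (c⁻¹ - 1)) = p / (p + c * (1 - p)) := by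
  have hden : 1 + p * (c⁻¹ - 1) = (p + c * (1 - p)) / c := by
    field_simp
    ring
  rw [hden, div_div_eq_mul_div, one_sub_div hpc]
  congr 1
  ring

theorem one_div_one_add_div_le_div_add_mul_one_sub [LinearOrder 𝕜] [IsStrictOrderedRing 𝕜]
    {p c : 𝕜} (hp : 0 < p) (hc : 0 ≤ c) (hpc : 0 < p + c * (1 - p)) :
    1 / (1 + c / p) ≤ p / (p + c * (1 - p)) :=
  calc 1 / (1 + c / p) = p / (p + c) := by field_simp
    _ ≤ p / (p + c * (1 - p)) :=
      div_le_div_of_nonneg_left hp.le hpc <|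
        add_le_add_right (mul_le_of_le_one_right hc (sub_le_self 1 hp.le)) p

end Quotients

theorem stmt12_general {A T : Type*} [Fintype T]
    (pref : T → ℝ) (hpref : ∀ τ, 0 ≤ pref τ) (hpref1 : ∑ τ, pref τ = 1)
    (pit : T → A → ℝ) (τs : T) (hprefs : 0 < pref τs) (Δ : ℝ) (h : List A)
    (hpit : ∀ τ, ∀ a ∈ h, 0 ≤ pit τ a)
    (hmargin : ∀ a ∈ h, 0 < pit τs a ∧
      ∀ τ, τ ≠ τs → pit τ a ≤ Real.exp (-Δ) * pit τs a) :
    1 - (1 - pref τs) / (1 + pref τs * (Real.exp ((h.length : ℝ) * Δ) - 1))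
        ≤ postW pref pit h τs
    ∧ 1 / (1 + Real.exp (-(h.length : ℝ) * Δ) / pref τs)
        ≤ 1 - (1 - pref τs) / (1 + pref τs * (Real.exp ((h.length : ℝ) * Δ) - 1)) := by
  have hexp_neg : Real.exp (-(h.length : ℝ) * Δ) = Real.exp (-Δ) ^ h.length := by
    rw [← Real.exp_nat_mul, neg_mul_comm]
  have hexp : Real.exp ((h.length : ℝ) * Δ) = (Real.exp (-Δ) ^ h.length)⁻¹ := by
    rw [← hexp_neg, ← Real.exp_neg, neg_mul, neg_neg]
  have hc : 0 < Real.exp (-Δ) ^ h.length := pow_pos (Real.exp_pos _) _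
  have hprefs_le : pref τs ≤ 1 :=
    hpref1 ▸ single_le_sum (fun τ _ => hpref τ) (mem_univ τs)
  have hden : 0 < pref τs + Real.exp (-Δ) ^ h.length * (1 - pref τs) :=
    add_pos_of_pos_of_nonneg hprefs (mul_nonneg hc.le (sub_nonneg.2 hprefs_le))
  rw [hexp, hexp_neg, one_sub_div_one_add_mul_inv_sub_one hc.ne' hden.ne']
  exact ⟨div_add_mul_one_sub_le_postW hpref hprefs hpref1 hpit (fun a ha => (hmargin a ha).1)
      fun a ha => (hmargin a ha).2,
    one_div_one_add_div_le_div_add_mul_one_sub hprefs hc.le hden⟩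

/-- posterior weight concentration.  If every action in the history
`h` (of length `k`) satisfies the margin condition `π^τ(a_j) ≤ e^{−Δ}·π^{τ*}(a_j)`
for all `τ ≠ τ*` (with `π^{τ*}(a_j) > 0`), then
`w_h(τ*) ≥ 1 − (1 − p_ref(τ*))/(1 + p_ref(τ*)(e^{kΔ} − 1)) ≥ 1/(1 + e^{−kΔ}/p_ref(τ*))`. -/
theorem stmt12 {A : Type*} [Fintype A] {T : Type*} [Fintype T]
    (pref : T → ℝ) (hpref0 : ∀ τ, 0 < pref τ) (hpref1 : ∑ τ, pref τ = 1)
    (pit : T → A → ℝ) (hpit : ∀ τ, IsPolicy (pit τ))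
    (τs : T) (Δ : ℝ) (hΔ : 0 < Δ)
    (h : List A)
    (hmargin : ∀ a ∈ h, 0 < pit τs a ∧
      ∀ τ, τ ≠ τs → pit τ a ≤ Real.exp (-Δ) * pit τs a) :
    1 - (1 - pref τs) / (1 + pref τs * (Real.exp ((h.length : ℝ) * Δ) - 1))
        ≤ postW pref pit h τs
    ∧ 1 / (1 + Real.exp (-(h.length : ℝ) * Δ) / pref τs)
        ≤ 1 - (1 - pref τs) / (1 + pref τs * (Real.exp ((h.length : ℝ) * Δ) - 1)) :=
  stmt12_general pref (fun τ => (hpref0 τ).le) hpref1 pit τs (hpref0 τs) Δ h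
    (fun τ a _ => (hpit τ).1 a) hmargin
end

section
/- Perturbation stability of the E_M-divergence and rejection thresholds. Let p, q₁, q₂ be probability mass functions on a finite action set 𝒜 and 0 < ε < 1. If q₁(a) ≥ (1 − ε)·q₂(a) for every a ∈ 𝒜, then for every M ≥ 0, E_M(p, q₁) ≤ (1 − ε)·E_M(p, q₂) + ε. Consequently, if M^ε_{p,q₂} < ∞ then E_{M^ε_{p,q₂}}(p, q₁) ≤ 2ε, so M^{2ε}_{p,q₁} ≤ M^ε_{p,q₂}. -/
open Finset

/-- The `E_M`-divergence between two policies on a finite action set. -/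
noncomputable def EMdiv {A : Type*} [Fintype A] (p q : A → ℝ) (M : ℝ) : ℝ :=
  ∑ a, max 0 (p a - M * q a)

/-- The rejection threshold `M^ε_{p,q}`: the smallest `M` with `E_M(p,q) ≤ ε`. -/
noncomputable def Meps {A : Type*} [Fintype A] (p q : A → ℝ) (ε : ℝ) : ℝ :=
  sInf {M : ℝ | EMdiv p q M ≤ ε}

/-!
Split `p = (1 - ε) p + ε p`. Replacing `q₁` by the smaller `(1 - ε) q₂` can only increase `E_M`; the
part `(1 - ε) p` against `(1 - ε) q₂` contributes `(1 - ε) E_M(p, q₂)` by homogeneity, and the part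
`ε p` contributes at most its mass `ε`. The thresholds are compared at `M = M^ε_{p,q₂}`: the infimum
is attained because `M ↦ E_M` is continuous and `E_M(p, q) ≥ ∑ p - M ∑ q`, a bound that also forces
`M > 0` whenever `E_M(p, q₂) ≤ ε < 1`.
-/

section EMdiv

variable {A : Type*} [Fintype A] {p q q₁ q₂ : A → ℝ} {M ε : ℝ}

lemma sum_sub_mul_sum_le_EMdiv (p q : A → ℝ) (M : ℝ) :
    ∑ a, p a - M * ∑ a, q a ≤ EMdiv p q M := by
  rw [mul_sum, ← sum_sub_distrib]
  exact sum_le_sum fun a _ => le_max_right _ _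

lemma continuous_EMdiv (p q : A → ℝ) : Continuous (EMdiv p q) := by
  unfold EMdiv
  fun_prop

lemma EMdiv_le_EMdiv_of_le_right (p : A → ℝ) (hq : q₂ ≤ q₁) (hM : 0 ≤ M) :
    EMdiv p q₁ M ≤ EMdiv p q₂ M := by
  unfold EMdiv
  gcongr with a
  exact hq a

lemma EMdiv_smul_smul {c : ℝ} (hc : 0 ≤ c) (p q : A → ℝ) (M : ℝ) :
    EMdiv (c • p) (c • q) M = c * EMdiv p q M := by
  simp only [EMdiv, mul_sum, mul_max_of_nonneg _ _ hc, Pi.smul_apply, smul_eq_mul, mul_zero,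
    mul_sub, mul_left_comm c M]

lemma EMdiv_add_left_le {r : A → ℝ} (hr : 0 ≤ r) (p q : A → ℝ) (M : ℝ) :
    EMdiv (p + r) q M ≤ EMdiv p q M + ∑ a, r a := by
  rw [EMdiv, EMdiv, ← sum_add_distrib]
  refine sum_le_sum fun a _ => ?_
  rw [Pi.add_apply, add_sub_right_comm, ← max_add_add_right, zero_add]
  exact max_le_max_right _ (hr a)

lemma EMdiv_le_of_one_sub_smul_le (hp : 0 ≤ p) (hε0 : 0 ≤ ε) (hε1 : ε ≤ 1)
    (hdom : (1 - ε) • q₂ ≤ q₁) (hM : 0 ≤ M) :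
    EMdiv p q₁ M ≤ (1 - ε) * EMdiv p q₂ M + ε * ∑ a, p a := by
  have hsplit : p = (1 - ε) • p + ε • p := by rw [← add_smul, sub_add_cancel, one_smul]
  calc
    EMdiv p q₁ M ≤ EMdiv p ((1 - ε) • q₂) M := EMdiv_le_EMdiv_of_le_right p hdom hM
    _ = EMdiv ((1 - ε) • p + ε • p) ((1 - ε) • q₂) M := by rw [← hsplit]
    _ ≤ EMdiv ((1 - ε) • p) ((1 - ε) • q₂) M + ∑ a, (ε • p) a :=
      EMdiv_add_left_le (smul_nonneg hε0 hp) _ _ M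
    _ = (1 - ε) * EMdiv p q₂ M + ε * ∑ a, p a := by
      rw [EMdiv_smul_smul (sub_nonneg.2 hε1), mul_sum]
      rfl

lemma mul_sum_pos_of_EMdiv_le (hε : ε < ∑ a, p a) (h : EMdiv p q M ≤ ε) :
    0 < M * ∑ a, q a := by
  linarith [sum_sub_mul_sum_le_EMdiv p q M]

lemma bddBelow_setOf_EMdiv_le (p : A → ℝ) (hq : 0 < ∑ a, q a) (ε : ℝ) :
    BddBelow {M : ℝ | EMdiv p q M ≤ ε} := by
  refine ⟨(∑ a, p a - ε) / ∑ a, q a, fun M hM => (div_le_iff₀ hq).2 ?_⟩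
  linarith [sum_sub_mul_sum_le_EMdiv p q M, Set.mem_ofPred.1 hM]

lemma Meps_le_of_EMdiv_le (hq : 0 < ∑ a, q a) (h : EMdiv p q M ≤ ε) : Meps p q ε ≤ M :=
  csInf_le (bddBelow_setOf_EMdiv_le p hq ε) h

lemma EMdiv_Meps_le (hq : 0 < ∑ a, q a) (hne : {M : ℝ | EMdiv p q M ≤ ε}.Nonempty) :
    EMdiv p q (Meps p q ε) ≤ ε :=
  (isClosed_le (continuous_EMdiv p q) continuous_const).csInf_mem hne
    (bddBelow_setOf_EMdiv_le p hq ε)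

end EMdiv

theorem stmt13_general {A : Type*} [Fintype A]
    (p q1 q2 : A → ℝ) (hp : IsPolicy p) (hq2 : 0 ≤ ∑ a, q2 a)
    (ε : ℝ) (hε0 : 0 ≤ ε) (hε1 : ε < 1)
    (hdom : ∀ a, (1 - ε) * q2 a ≤ q1 a) :
    (∀ M : ℝ, 0 ≤ M → EMdiv p q1 M ≤ (1 - ε) * EMdiv p q2 M + ε)
    ∧ ({M : ℝ | EMdiv p q2 M ≤ ε}.Nonempty →
        EMdiv p q1 (Meps p q2 ε) ≤ 2 * ε ∧ Meps p q1 (2 * ε) ≤ Meps p q2 ε) := by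
  have stability (M : ℝ) (hM : 0 ≤ M) : EMdiv p q1 M ≤ (1 - ε) * EMdiv p q2 M + ε := by
    simpa only [hp.2, mul_one] using EMdiv_le_of_one_sub_smul_le hp.1 hε0 hε1.le hdom hM
  refine ⟨stability, fun hne => ?_⟩
  have hε_mass : ε < ∑ a, p a := hp.2.symm ▸ hε1
  have hq2_pos : 0 < ∑ a, q2 a := by
    obtain ⟨M, hM⟩ := hne
    exact hq2.lt_of_ne' (right_ne_zero_of_mul (mul_sum_pos_of_EMdiv_le hε_mass hM).ne')
  have hq1_pos : 0 < ∑ a, q1 a := calc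
    0 < (1 - ε) * ∑ a, q2 a := mul_pos (sub_pos.2 hε1) hq2_pos
    _ ≤ ∑ a, q1 a := by rw [mul_sum]; exact sum_le_sum fun a _ => hdom a
  have hmem : EMdiv p q2 (Meps p q2 ε) ≤ ε := EMdiv_Meps_le hq2_pos hne
  have hMeps_pos : 0 < Meps p q2 ε :=
    pos_of_mul_pos_left (mul_sum_pos_of_EMdiv_le hε_mass hmem) hq2
  have hle : EMdiv p q1 (Meps p q2 ε) ≤ 2 * ε := calc
    EMdiv p q1 (Meps p q2 ε) ≤ (1 - ε) * EMdiv p q2 (Meps p q2 ε) + ε :=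
      stability _ hMeps_pos.le
    _ ≤ (1 - ε) * ε + ε := by gcongr
    _ ≤ 2 * ε := by linarith [mul_nonneg hε0 hε0]
  exact ⟨hle, Meps_le_of_EMdiv_le hq1_pos hle⟩

/-- perturbation stability of `E_M` and rejection thresholds.  If
`q₁ ≥ (1−ε)·q₂` pointwise, then `E_M(p,q₁) ≤ (1−ε)·E_M(p,q₂) + ε` for all `M ≥ 0`;
consequently, if `M^ε_{p,q₂} < ∞` then `E_{M^ε_{p,q₂}}(p,q₁) ≤ 2ε` and
`M^{2ε}_{p,q₁} ≤ M^ε_{p,q₂}`. -/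
theorem stmt13 {A : Type*} [Fintype A]
    (p q1 q2 : A → ℝ) (hp : IsPolicy p) (hq1 : IsPolicy q1) (hq2 : IsPolicy q2)
    (ε : ℝ) (hε0 : 0 < ε) (hε1 : ε < 1)
    (hdom : ∀ a, (1 - ε) * q2 a ≤ q1 a) :
    (∀ M : ℝ, 0 ≤ M → EMdiv p q1 M ≤ (1 - ε) * EMdiv p q2 M + ε)
    ∧ ({M : ℝ | EMdiv p q2 M ≤ ε}.Nonempty →
        EMdiv p q1 (Meps p q2 ε) ≤ 2 * ε ∧ Meps p q1 (2 * ε) ≤ Meps p q2 ε) :=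
  stmt13_general p q1 q2 hp (sum_nonneg fun a _ => hq2.1 a) ε hε0.le hε1 hdom
end
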